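/- arXiv:0910.3619 — 6 statements merged into one kernel-verified Lean document; each statement's English description precedes it below -/
import Mathlib

section
/- Let R be a commutative ring, m ≤ n, A an n×n matrix and B an n×m matrix over R. Suppose M is an invertible n×n matrix, N an invertible m×m matrix, and Δ an m×m matrix over R such that M·B·N equals the block matrix having Δ as its first m rows and the (n−m)×m zero matrix as its last n−m rows. Let G be the m×n matrix formed by the first m rows of M·A and F the (n−m)×n matrix formed by the last n−m rows of M·A. Then for every x : Fin n → R and u : Fin m → R, one has A.mulVec x = B.mulVec u if and only if F.mulVec x = 0 and Δ.mulVec ((N⁻¹).mulVec u) = G.mulVec x. -/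
/-- Proposition 2 (first part): equivalence of the explicit representation `Ax = Bu`
with the semi-implicit representation obtained from a Smith-Jacobson decomposition of `B`.
Here `Fin n` is identified with `Fin m ⊕ Fin k` (with `k = n - m`). -/
theorem explicit_iff_semiImplicit {R : Type*} [CommRing R] (m k : ℕ)
    (A : Matrix (Fin m ⊕ Fin k) (Fin m ⊕ Fin k) R)
    (B : Matrix (Fin m ⊕ Fin k) (Fin m) R)
    (M : Matrix (Fin m ⊕ Fin k) (Fin m ⊕ Fin k) R)
    (N Δ : Matrix (Fin m) (Fin m) R)
    (hM : IsUnit M) (hN : IsUnit N)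
    (hMBN : M * B * N = Matrix.fromRows Δ (0 : Matrix (Fin k) (Fin m) R))
    (G : Matrix (Fin m) (Fin m ⊕ Fin k) R) (hG : G = (M * A).submatrix Sum.inl id)
    (F : Matrix (Fin k) (Fin m ⊕ Fin k) R) (hF : F = (M * A).submatrix Sum.inr id) :
    ∀ (x : Fin m ⊕ Fin k → R) (u : Fin m → R),
      A.mulVec x = B.mulVec u ↔
        (F.mulVec x = 0 ∧ Δ.mulVec (N⁻¹.mulVec u) = G.mulVec x) := by
  intro x u
  have hNd : IsUnit N.det := (Matrix.isUnit_iff_isUnit_det N).mp hN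
  have hMB : (M * B).mulVec u
      = Sum.elim (Δ.mulVec (N⁻¹.mulVec u)) (0 : Fin k → R) := by
    have h1 : M * B = Matrix.fromRows Δ (0 : Matrix (Fin k) (Fin m) R) * N⁻¹ := by
      rw [← hMBN, Matrix.mul_nonsing_inv_cancel_right _ _ hNd]
    rw [h1, ← Matrix.mulVec_mulVec, Matrix.fromRows_mulVec, Matrix.zero_mulVec]
  have hMA : (M * A).mulVec x = Sum.elim (G.mulVec x) (F.mulVec x) := by
    subst hG hF
    funext i
    cases i <;> rfl
  have hinj : A.mulVec x = B.mulVec u ↔ (M * A).mulVec x = (M * B).mulVec u := by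
    rw [← Matrix.mulVec_mulVec, ← Matrix.mulVec_mulVec]
    exact (Matrix.mulVec_injective_of_isUnit hM).eq_iff.symm
  rw [hinj, hMA, hMB, Sum.elim_eq_iff]
  constructor
  · rintro ⟨h1, h2⟩
    exact ⟨h2, h1.symm⟩
  · rintro ⟨h1, h2⟩
    exact ⟨h2.symm, h1⟩
end

section
/- Let R be a commutative ring, m ≤ n, A an n×n matrix and B an n×m matrix over R. Suppose B is hyper-regular, i.e. there exist an invertible n×n matrix M and an invertible m×m matrix N over R such that M·B·N equals the block matrix having the m×m identity as its first m rows and the (n−m)×m zero matrix as its last n−m rows. Let G be the m×n matrix formed by the first m rows of M·A and F the (n−m)×n matrix formed by the last n−m rows of M·A. Then for every x : Fin n → R and u : Fin m → R, one has A.mulVec x = B.mulVec u if and only if F.mulVec x = 0 and u = (N·G).mulVec x. In particular the input u is uniquely determined by x, and the explicit system Ax = Bu is equivalent to the implicit system Fx = 0 together with the recovery formula u = N·G·x. -/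
/-- Proposition 2 (second part): if `B` is hyper-regular, the explicit system `Ax = Bu`
is equivalent to the implicit system `Fx = 0` together with the recovery formula
`u = N·G·x`.  Here `Fin n` is identified with `Fin m ⊕ Fin k` (with `k = n - m`). -/
theorem explicit_iff_implicit_of_hyperRegular {R : Type*} [CommRing R] (m k : ℕ)
    (A : Matrix (Fin m ⊕ Fin k) (Fin m ⊕ Fin k) R)
    (B : Matrix (Fin m ⊕ Fin k) (Fin m) R)
    (M : Matrix (Fin m ⊕ Fin k) (Fin m ⊕ Fin k) R)
    (N : Matrix (Fin m) (Fin m) R)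
    (hM : IsUnit M) (hN : IsUnit N)
    (hMBN : M * B * N =
      Matrix.fromRows (1 : Matrix (Fin m) (Fin m) R) (0 : Matrix (Fin k) (Fin m) R))
    (G : Matrix (Fin m) (Fin m ⊕ Fin k) R) (hG : G = (M * A).submatrix Sum.inl id)
    (F : Matrix (Fin k) (Fin m ⊕ Fin k) R) (hF : F = (M * A).submatrix Sum.inr id) :
    ∀ (x : Fin m ⊕ Fin k → R) (u : Fin m → R),
      A.mulVec x = B.mulVec u ↔ (F.mulVec x = 0 ∧ u = (N * G).mulVec x) := by
  intro x u
  obtain ⟨Ninv, hNright, hNleft⟩ : ∃ Ninv, N * Ninv = 1 ∧ Ninv * N = 1 :=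
    ⟨_, hN.mul_val_inv, hN.val_inv_mul⟩
  obtain ⟨Minv, hMleft⟩ : ∃ Minv, Minv * M = 1 := ⟨_, hM.val_inv_mul⟩
  obtain ⟨v, rfl⟩ : ∃ v, u = N.mulVec v :=
    ⟨Ninv.mulVec u, by rw [Matrix.mulVec_mulVec, hNright, Matrix.one_mulVec]⟩
  have h1 : A.mulVec x = B.mulVec (N.mulVec v) ↔
      (M * A).mulVec x = (M * B * N).mulVec v := by
    rw [← Matrix.mulVec_mulVec, ← Matrix.mulVec_mulVec, ← Matrix.mulVec_mulVec]
    refine ⟨fun h => by rw [h], fun h => ?_⟩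
    have h2 := congrArg Minv.mulVec h
    simpa only [Matrix.mulVec_mulVec _ Minv M, hMleft, Matrix.one_mulVec] using h2
  have h3 : N.mulVec v = (N * G).mulVec x ↔ v = G.mulVec x := by
    rw [← Matrix.mulVec_mulVec]
    refine ⟨fun h => ?_, fun h => by rw [h]⟩
    have h2 := congrArg Ninv.mulVec h
    simpa only [Matrix.mulVec_mulVec _ Ninv N, hNleft, Matrix.one_mulVec] using h2
  have hGx : ∀ i, G.mulVec x i = (M * A).mulVec x (Sum.inl i) := by
    intro i; rw [hG]; rfl
  have hFx : ∀ i, F.mulVec x i = (M * A).mulVec x (Sum.inr i) := by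
    intro i; rw [hF]; rfl
  rw [h1, h3, hMBN, Matrix.fromRows_mulVec, Matrix.one_mulVec, Matrix.zero_mulVec]
  constructor
  · intro h
    refine ⟨funext fun i => ?_, funext fun i => ?_⟩
    · rw [hFx, h]; rfl
    · rw [hGx, h]; rfl
  · rintro ⟨hf, hg⟩
    funext i
    rcases i with i | i
    · rw [← hGx, ← hg]; rfl
    · rw [← hFx, hf]; rfl
end

section
/- Let R be a principal ideal domain (a commutative domain satisfying IsPrincipalIdealRing), and let M be a p×q matrix over R. Then there exist an invertible p×p matrix U and an invertible q×q matrix V over R such that the matrix D := U·M·V is 'rectangular diagonal', i.e. D i j = 0 whenever the natural-number values of i and j differ, and the diagonal entries satisfy the divisibility chain: for all valid indices i ≤ j, D i i divides D j j. -/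
namespace SmithAux

open Matrix

variable {R : Type*} [CommRing R]

/-- Equivalence of matrices. -/
def Eqv {p q : ℕ} (M N : Matrix (Fin p) (Fin q) R) : Prop :=
  ∃ (U : Matrix (Fin p) (Fin p) R) (V : Matrix (Fin q) (Fin q) R),
    IsUnit U ∧ IsUnit V ∧ N = U * M * V

theorem Eqv.refl {p q : ℕ} (M : Matrix (Fin p) (Fin q) R) : Eqv M M :=
  ⟨1, 1, isUnit_one, isUnit_one, by simp⟩

theorem Eqv.trans {p q : ℕ} {M N K : Matrix (Fin p) (Fin q) R} (h : Eqv M N) (h' : Eqv N K) :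
    Eqv M K := by
  obtain ⟨U, V, hU, hV, rfl⟩ := h
  obtain ⟨U', V', hU', hV', rfl⟩ := h'
  exact ⟨U' * U, V * V', hU'.mul hU, hV.mul hV', by simp only [Matrix.mul_assoc]⟩

theorem Eqv.transpose {p q : ℕ} {M N : Matrix (Fin p) (Fin q) R} (h : Eqv M N) :
    Eqv Mᵀ Nᵀ := by
  obtain ⟨U, V, hU, hV, rfl⟩ := h
  exact ⟨Vᵀ, Uᵀ, (Matrix.isUnit_transpose V).2 hV, (Matrix.isUnit_transpose U).2 hU, by
    simp only [Matrix.transpose_mul, Matrix.mul_assoc]⟩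

/-- Apply an invertible linear map to each column. -/
theorem eqv_map {p q : ℕ} (f g : (Fin p → R) →ₗ[R] (Fin p → R)) (hgf : ∀ x, g (f x) = x)
    (hfg : ∀ x, f (g x) = x)
    (M : Matrix (Fin p) (Fin q) R) : Eqv M (Matrix.of fun i j => f (fun l => M l j) i) := by
  refine ⟨LinearMap.toMatrix' f, 1, ?_, isUnit_one, ?_⟩
  · refine ⟨⟨LinearMap.toMatrix' f, LinearMap.toMatrix' g, ?_, ?_⟩, rfl⟩
    · rw [← LinearMap.toMatrix'_comp, ← LinearMap.toMatrix'_id]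
      congr 1; ext1 x; ext; simp [hfg]
    · rw [← LinearMap.toMatrix'_comp, ← LinearMap.toMatrix'_id]
      congr 1; ext1 x; ext; simp [hgf]
  · ext i j
    rw [Matrix.mul_one, Matrix.of_apply, ← LinearMap.toMatrix'_mulVec]
    rfl

/-- Two-row operation as a linear map. -/
def two {p : ℕ} (i k : Fin p) (a b c d : R) : (Fin p → R) →ₗ[R] (Fin p → R) where
  toFun x l := if l = i then a * x i + b * x k else if l = k then c * x i + d * x k else x l
  map_add' x y := by ext l; simp only [Pi.add_apply]; split_ifs <;> ring
  map_smul' r x := by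
    ext l; simp only [Pi.smul_apply, smul_eq_mul, RingHom.id_apply]; split_ifs <;> ring

theorem two_two {p : ℕ} {i k : Fin p} (hik : i ≠ k) (a b c d : R) (h : a * d - b * c = 1)
    (x : Fin p → R) : two i k d (-b) (-c) a (two i k a b c d x) = x := by
  ext l
  simp only [two, LinearMap.coe_mk, AddHom.coe_mk, if_true, if_neg hik.symm]
  split_ifs with h1 h2
  · subst h1; linear_combination x l * h
  · subst h2; linear_combination x l * h
  · rfl

theorem eqv_two {p q : ℕ} {i k : Fin p} (hik : i ≠ k) (a b c d : R) (h : a * d - b * c = 1)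
    (M : Matrix (Fin p) (Fin q) R) : ∃ N, Eqv M N ∧ (∀ j, N i j = a * M i j + b * M k j) ∧
      (∀ j, N k j = c * M i j + d * M k j) := by
  refine ⟨_, eqv_map (two i k a b c d) (two i k d (-b) (-c) a) (two_two hik a b c d h) ?_ M, ?_, ?_⟩
  · intro x
    have := two_two hik d (-b) (-c) a (by linear_combination h) x
    simpa using this
  · intro j; simp [two]
  · intro j; simp [two, hik.symm]

/-- An entry generating a maximal ideal among all entries of equivalent matrices. -/
def Good {p q : ℕ} (N : Matrix (Fin p) (Fin q) R) (d : R) : Prop :=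
  ∀ K, Eqv N K → ∀ i j, K i j ∣ d → d ∣ K i j

theorem Good.eqv {p q : ℕ} {N K : Matrix (Fin p) (Fin q) R} {d : R} (h : Good N d)
    (e : Eqv N K) : Good K d := fun L hL => h L (e.trans hL)

theorem Good.transpose {p q : ℕ} {N : Matrix (Fin p) (Fin q) R} {d : R} (h : Good N d) :
    Good Nᵀ d := fun L hL i j => h Lᵀ (by simpa using hL.transpose) j i

theorem Good.col [IsDomain R] [IsPrincipalIdealRing R] {p q : ℕ} {N : Matrix (Fin p) (Fin q) R}
    {i : Fin p} {j : Fin q} (h : Good N (N i j)) (k : Fin p) : N i j ∣ N k j := by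
  by_cases hik : i = k
  · rw [hik]
  by_cases h0 : N i j = 0
  · obtain ⟨K, hK, h1, h2⟩ := eqv_two hik 0 1 (-1) 0 (by ring) N
    have := h K hK i j (by rw [h0]; exact dvd_zero _)
    rw [h1] at this
    simpa using this
  obtain ⟨g, hg⟩ := IsPrincipalIdealRing.principal (Ideal.span {N i j, N k j})
  have hg' : Ideal.span {N i j, N k j} = Ideal.span {g} := hg
  have h1 : g ∣ N i j := Ideal.mem_span_singleton.1 (hg' ▸ Ideal.subset_span (by simp))
  have h2 : g ∣ N k j := Ideal.mem_span_singleton.1 (hg' ▸ Ideal.subset_span (by simp))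
  have h3 : g ∈ Ideal.span {N i j, N k j} := hg' ▸ Ideal.mem_span_singleton_self g
  obtain ⟨a, b, hab⟩ := Ideal.mem_span_pair.1 h3
  obtain ⟨u, hu⟩ := h1
  obtain ⟨v, hv⟩ := h2
  have hgne : g ≠ 0 := by rintro rfl; simp at hu; exact h0 hu
  have hdet : a * u - b * (-v) = 1 := by
    apply mul_left_cancel₀ hgne
    linear_combination hab - a * hu - b * hv
  obtain ⟨K, hK, e1, -⟩ := eqv_two hik a b (-v) u hdet N
  have hKg : K i j = g := by rw [e1, hab]
  have := h K hK i j (by rw [hKg]; exact ⟨u, hu⟩)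
  rw [hKg] at this
  exact this.trans ⟨v, hv⟩

theorem Good.row [IsDomain R] [IsPrincipalIdealRing R] {p q : ℕ} {N : Matrix (Fin p) (Fin q) R}
    {i : Fin p} {j : Fin q} (h : Good N (N i j)) (k : Fin q) : N i j ∣ N i k :=
  Good.col (N := Nᵀ) (i := j) (j := i) h.transpose k

theorem Good.all [IsDomain R] [IsPrincipalIdealRing R] {p q : ℕ} {N : Matrix (Fin p) (Fin q) R}
    {i : Fin p} {j : Fin q} (h : Good N (N i j)) (k : Fin p) (l : Fin q) : N i j ∣ N k l := by
  by_cases hik : i = k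
  · subst hik; exact h.row l
  obtain ⟨c, hc⟩ := h.col k
  obtain ⟨K, hK, -, e2⟩ := eqv_two hik 1 0 (1 - c) 1 (by ring) N
  have hd : K k j = N i j := by rw [e2, hc]; ring
  have h' : Good K (K k j) := hd ▸ h.eqv hK
  have h3 := h'.row l
  rw [hd, e2] at h3
  have h4 : N i j ∣ (1 - c) * N i l := (h.row l).mul_left _
  simpa using (dvd_add_right h4).1 h3

theorem move_row {p q : ℕ} (N : Matrix (Fin p) (Fin q) R) (i k : Fin p) :
    ∃ K, Eqv N K ∧ ∀ j, K k j = N i j := by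
  by_cases hik : k = i
  · exact ⟨N, .refl N, by simp [hik]⟩
  obtain ⟨K, hK, e1, -⟩ := eqv_two hik 0 1 (-1) 0 (by ring) N
  exact ⟨K, hK, by simp [e1]⟩

theorem exists_good [IsDomain R] [IsPrincipalIdealRing R] {p q : ℕ}
    (M : Matrix (Fin (p + 1)) (Fin (q + 1)) R) :
    ∃ N, Eqv M N ∧ ∀ i j, N 0 0 ∣ N i j := by
  let S : Set (Ideal R) := {I | ∃ N, Eqv M N ∧ ∃ i j, I = Ideal.span {N i j}}
  obtain ⟨I, ⟨N, hN, i, j, rfl⟩, hmax⟩ :=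
    set_has_maximal_iff_noetherian.2 (inferInstance : IsNoetherian R R) S
      ⟨_, M, .refl M, 0, 0, rfl⟩
  have hg : Good N (N i j) := by
    intro K hK i' j' hd
    by_contra hnd
    refine hmax _ ⟨K, hN.trans hK, i', j', rfl⟩ (lt_of_le_not_ge ?_ ?_)
    · exact Ideal.span_singleton_le_span_singleton.2 hd
    · intro hle; exact hnd (Ideal.span_singleton_le_span_singleton.1 hle)
  obtain ⟨K, hK, e1⟩ := move_row N i 0
  obtain ⟨L, hL, e2⟩ := move_row Kᵀ j 0
  have hL' : Eqv K Lᵀ := by simpa using hL.transpose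
  have h00 : Lᵀ 0 0 = N i j := by rw [← e1]; exact e2 0
  have hg' : Good Lᵀ (Lᵀ 0 0) := h00 ▸ (hg.eqv hK).eqv hL'
  exact ⟨Lᵀ, (hN.trans hK).trans hL', fun i j => hg'.all i j⟩

/-- Clearing the first column, as a linear map. -/
def clr {p : ℕ} (c : Fin p → R) : (Fin (p + 1) → R) →ₗ[R] (Fin (p + 1) → R) where
  toFun x := Fin.cons (x 0) (fun l => x l.succ - c l * x 0)
  map_add' x y := by
    ext l; refine Fin.cases ?_ (fun l => ?_) l <;> simp; ring
  map_smul' r x := by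
    ext l; refine Fin.cases ?_ (fun l => ?_) l <;> simp; ring

theorem clr_clr {p : ℕ} (c : Fin p → R) (x) : clr (-c) (clr c x) = x := by
  ext l; refine Fin.cases ?_ (fun l => ?_) l <;> simp [clr]

theorem clear_col {p q : ℕ} (N : Matrix (Fin (p + 1)) (Fin (q + 1)) R)
    (h : ∀ i j, N 0 0 ∣ N i j) :
    ∃ K, Eqv N K ∧ (∀ i j, K 0 0 ∣ K i j) ∧ (∀ j, K 0 j = N 0 j) ∧
      (∀ i : Fin p, K i.succ 0 = 0) := by
  choose c hc using fun i : Fin p => h i.succ 0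
  refine ⟨_, eqv_map (clr c) (clr (-c)) (clr_clr c) (fun x => by simpa using clr_clr (-c) x) N,
    ?_, ?_, ?_⟩
  · intro i j
    refine Fin.cases ?_ (fun l => ?_) i
    · simpa [clr] using h 0 j
    · simpa [clr] using dvd_sub (h _ _) ((h 0 j).mul_left (c l))
  · intro j; simp [clr]
  · intro i; simp [clr, hc]; ring

theorem clear_both {p q : ℕ} (N : Matrix (Fin (p + 1)) (Fin (q + 1)) R)
    (h : ∀ i j, N 0 0 ∣ N i j) :
    ∃ K, Eqv N K ∧ (∀ i j, K 0 0 ∣ K i j) ∧ (∀ j : Fin q, K 0 j.succ = 0) ∧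
      (∀ i : Fin p, K i.succ 0 = 0) := by
  obtain ⟨K, hK, k1, k2, k3⟩ := clear_col N h
  obtain ⟨L, hL, l1, l2, l3⟩ := clear_col Kᵀ (fun i j => k1 j i)
  refine ⟨Lᵀ, hK.trans (by simpa using hL.transpose), fun i j => l1 j i, l3, fun i => ?_⟩
  rw [Matrix.transpose_apply, l2, Matrix.transpose_apply, k3]

/-- Block extension of a matrix by `1`, as a linear map. -/
def blk {p : ℕ} (U : Matrix (Fin p) (Fin p) R) : (Fin (p + 1) → R) →ₗ[R] (Fin (p + 1) → R) where
  toFun x := Fin.cons (x 0) (U *ᵥ (fun l => x l.succ))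
  map_add' x y := by
    ext l; refine Fin.cases ?_ (fun l => ?_) l
    · simp
    · simp only [Fin.cons_succ, Pi.add_apply]
      rw [← Pi.add_apply, ← Matrix.mulVec_add]; rfl
  map_smul' r x := by
    ext l; refine Fin.cases ?_ (fun l => ?_) l
    · simp
    · simp only [Fin.cons_succ, Pi.smul_apply, RingHom.id_apply]
      rw [← Pi.smul_apply, ← Matrix.mulVec_smul]; rfl

theorem blk_blk {p : ℕ} (U V : Matrix (Fin p) (Fin p) R) (h : U * V = 1) (x) :
    blk U (blk V x) = x := by
  ext l; refine Fin.cases ?_ (fun l => ?_) l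
  · simp [blk]
  · simp [blk, h]

theorem eqv_blk {p q : ℕ} (U : Matrix (Fin p) (Fin p) R) (hU : IsUnit U)
    (M : Matrix (Fin (p + 1)) (Fin q) R) :
    ∃ K, Eqv M K ∧ (∀ j, K 0 j = M 0 j) ∧
      ∀ i j, K (Fin.succ i) j = (U * M.submatrix Fin.succ id) i j := by
  obtain ⟨u, rfl⟩ := hU
  refine ⟨_, eqv_map (blk u.1) (blk u.2) (blk_blk _ _ u.4) (blk_blk _ _ u.3) M, ?_, ?_⟩
  · intro j; simp [blk]
  · intro i j; simp only [blk, Matrix.of_apply, LinearMap.coe_mk, AddHom.coe_mk, Fin.cons_succ]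
    rfl

theorem eqv_blk_both {p q : ℕ} (U : Matrix (Fin p) (Fin p) R) (V : Matrix (Fin q) (Fin q) R)
    (hU : IsUnit U) (hV : IsUnit V)
    (M : Matrix (Fin (p + 1)) (Fin (q + 1)) R) (h1 : ∀ j : Fin q, M 0 j.succ = 0)
    (h2 : ∀ i : Fin p, M i.succ 0 = 0) :
    ∃ K, Eqv M K ∧ K 0 0 = M 0 0 ∧ (∀ j : Fin q, K 0 j.succ = 0) ∧
      (∀ i : Fin p, K i.succ 0 = 0) ∧
      ∀ i j, K (Fin.succ i) (Fin.succ j) = (U * M.submatrix Fin.succ Fin.succ * V) i j := by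
  obtain ⟨K, hK, k1, k2⟩ := eqv_blk U hU M
  obtain ⟨L, hL, l1, l2⟩ := eqv_blk Vᵀ ((Matrix.isUnit_transpose V).2 hV) Kᵀ
  refine ⟨Lᵀ, hK.trans (by simpa using hL.transpose), ?_, ?_, ?_, ?_⟩
  · rw [Matrix.transpose_apply, l1, Matrix.transpose_apply, k1]
  · intro j
    rw [Matrix.transpose_apply, l2, Matrix.mul_apply]
    simp [k1, h1]
  · intro i
    rw [Matrix.transpose_apply, l1, Matrix.transpose_apply, k2, Matrix.mul_apply]
    simp [h2]
  · intro i j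
    rw [Matrix.transpose_apply, l2, Matrix.mul_apply, Matrix.mul_apply]
    refine Finset.sum_congr rfl fun x _ => ?_
    simp only [Matrix.submatrix_apply, Matrix.transpose_apply, k2, id]
    rw [mul_comm]
    rfl

/-- Smith normal form. -/
def Smith {p q : ℕ} (D : Matrix (Fin p) (Fin q) R) : Prop :=
  (∀ (i : Fin p) (j : Fin q), (i : ℕ) ≠ (j : ℕ) → D i j = 0) ∧
      (∀ (i i' : Fin p) (j j' : Fin q),
        (i : ℕ) = (j : ℕ) → (i' : ℕ) = (j' : ℕ) → (i : ℕ) ≤ (i' : ℕ) → D i j ∣ D i' j')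

theorem exists_smith [IsDomain R] [IsPrincipalIdealRing R] (p : ℕ) : ∀ (q : ℕ)
    (M : Matrix (Fin p) (Fin q) R), ∃ D, Eqv M D ∧ Smith D := by
  induction p with
  | zero => exact fun q M => ⟨M, .refl M, fun i => i.elim0, fun i => i.elim0⟩
  | succ p ih =>
    intro q M
    cases q with
    | zero => exact ⟨M, .refl M, fun _ j => j.elim0, fun _ _ j => j.elim0⟩
    | succ q =>
      obtain ⟨N, hN, n1⟩ := exists_good M
      obtain ⟨K, hK, k1, k2, k3⟩ := clear_both N n1
      obtain ⟨_, ⟨U, V, hU, hV, rfl⟩, d1, d2⟩ := ih q (K.submatrix Fin.succ Fin.succ)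
      obtain ⟨L, hL, l0, l1, l2, l3⟩ := eqv_blk_both U V hU hV K k2 k3
      have hdvd : ∀ i j, L 0 0 ∣ L i j := by
        intro i j
        refine Fin.cases ?_ (fun i => ?_) i
        · refine Fin.cases ?_ (fun j => ?_) j
          · exact dvd_rfl
          · rw [l1]; exact dvd_zero _
        · refine Fin.cases ?_ (fun j => ?_) j
          · rw [l2]; exact dvd_zero _
          · rw [l3, l0, Matrix.mul_apply]
            refine Finset.dvd_sum fun x _ => Dvd.dvd.mul_right ?_ _
            rw [Matrix.mul_apply]
            exact Finset.dvd_sum fun y _ => Dvd.dvd.mul_left (k1 _ _) _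
      refine ⟨L, (hN.trans hK).trans hL, ?_, ?_⟩
      · intro i j
        refine Fin.cases ?_ (fun i => ?_) i
        · refine Fin.cases ?_ (fun j => ?_) j
          · intro h; exact absurd rfl h
          · intro _; exact l1 j
        · refine Fin.cases ?_ (fun j => ?_) j
          · intro _; exact l2 i
          · intro h
            rw [l3]
            exact d1 i j (by simpa using h)
      · intro i i' j j' h h' hle
        rcases Fin.eq_zero_or_eq_succ i with rfl | ⟨i, rfl⟩
        · have : j = 0 := Fin.ext h.symm
          subst this
          exact hdvd _ _
        · rcases Fin.eq_zero_or_eq_succ i' with rfl | ⟨i', rfl⟩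
          · simp at hle
          · rcases Fin.eq_zero_or_eq_succ j with rfl | ⟨j, rfl⟩
            · simp at h
            · rcases Fin.eq_zero_or_eq_succ j' with rfl | ⟨j', rfl⟩
              · simp at h'
              · rw [l3, l3]
                exact d2 i i' j j' (by simpa using h) (by simpa using h') (by simpa using hle)

end SmithAux

/-- Smith-Jacobson (diagonal) decomposition, Theorem 1 of the paper, in the commutative
case: every `p × q` matrix over a principal ideal domain is equivalent, via invertible
matrices `U` and `V`, to a rectangular diagonal matrix whose diagonal entries form a
divisibility chain. -/
theorem smith_jacobson_decomposition {R : Type*} [CommRing R] [IsDomain R]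
    [IsPrincipalIdealRing R] (p q : ℕ) (M : Matrix (Fin p) (Fin q) R) :
    ∃ (U : Matrix (Fin p) (Fin p) R) (V : Matrix (Fin q) (Fin q) R),
      IsUnit U ∧ IsUnit V ∧
      (∀ (i : Fin p) (j : Fin q), (i : ℕ) ≠ (j : ℕ) → (U * M * V) i j = 0) ∧
      (∀ (i i' : Fin p) (j j' : Fin q),
        (i : ℕ) = (j : ℕ) → (i' : ℕ) = (j' : ℕ) → (i : ℕ) ≤ (i' : ℕ) →
        (U * M * V) i j ∣ (U * M * V) i' j') := by
  obtain ⟨_, ⟨U, V, hU, hV, rfl⟩, h1, h2⟩ := SmithAux.exists_smith p q M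
  exact ⟨U, V, hU, hV, h1, h2⟩
end

section
/- Let τ be a real number and let y₁, y₂ : ℝ → ℝ be C^∞ functions (ContDiff ℝ ⊤). Write f⁽ᵏ⁾ for the k-th iterated derivative. Define x₁ := y₂, x₂ := y₁, x₃(t) := −y₁(t) + y₁⁽²⁾(t) − y₂(t−τ) + y₂⁽²⁾(t) + y₂⁽³⁾(t), x₄(t) := y₁⁽¹⁾(t) − y₁⁽²⁾(t) + y₂⁽¹⁾(t) − y₂⁽¹⁾(t−τ) + y₂⁽²⁾(t), u₁(t) := −y₁⁽³⁾(t) + y₂⁽¹⁾(t) − y₂⁽³⁾(t) − y₂⁽⁴⁾(t), u₂(t) := y₁⁽³⁾(t) + y₁⁽⁴⁾(t) − y₂⁽²⁾(t) + y₂⁽³⁾(t) + 2·y₂⁽⁴⁾(t) + y₂⁽⁵⁾(t). Then for all t ∈ ℝ the following four identities hold (where xᵢ⁽ᵏ⁾ denotes the k-th derivative of the function xᵢ): (1) x₁⁽¹⁾(t) + x₁⁽²⁾(t) − 2x₁⁽²⁾(t−τ) + x₁⁽³⁾(t) + x₁⁽⁴⁾(t−τ) − x₂⁽³⁾(t) +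 x₂⁽⁵⁾(t) − x₃⁽²⁾(t) − x₄⁽¹⁾(t) + x₄⁽³⁾(t) = u₁(t) + u₁⁽¹⁾(t) + u₂(t); (2) x₁⁽¹⁾(t) + x₁⁽¹⁾(t−τ) − x₁⁽¹⁾(t−2τ) + x₁⁽²⁾(t) + x₁⁽²⁾(t−τ) + x₁⁽²⁾(t−2τ) − x₁⁽³⁾(t−τ) + 2x₂⁽¹⁾(t) + x₂⁽¹⁾(t−τ) − x₂⁽²⁾(t) − x₂⁽⁴⁾(t) + x₃⁽¹⁾(t) + x₃⁽²⁾(t−τ) − x₄(t) − x₄(t−τ) − x₄⁽²⁾(t) = u₁⁽²⁾(t−τ) + u₂⁽¹⁾(t−τ); (3) −x₁(t−2τ) + x₁⁽¹⁾(t−3τ) + x₁⁽²⁾(t−2τ) − x₂(t−τ) + x₂⁽¹⁾(t−2τ) + x₂⁽³⁾(t−τ) − x₃(t−τ) + x₃⁽¹⁾(t−2τ) + x₄⁽¹⁾(t−τ) = u₁⁽¹⁾(t−2τ) + u₂(t−2τ); (4) x₁⁽¹⁾(t−τ) + x₂⁽¹⁾(t) + x₃⁽¹⁾(t) = u₁⁽¹⁾(t)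 + u₂(t). -/
theorem aux_hasDerivAt {y : ℝ → ℝ} (hy : ContDiff ℝ (⊤ : ℕ∞) y) (k : ℕ) (t : ℝ) :
    HasDerivAt (iteratedDeriv k y) (iteratedDeriv (k + 1) y t) t := by
  rw [iteratedDeriv_succ]
  apply DifferentiableAt.hasDerivAt
  exact (hy.differentiable_iteratedDeriv k (by exact_mod_cast WithTop.coe_lt_top k)) t

theorem aux_hasDerivAt_shift {y : ℝ → ℝ} (hy : ContDiff ℝ (⊤ : ℕ∞) y) (τ : ℝ) (k : ℕ) (t : ℝ) :
    HasDerivAt (fun s => iteratedDeriv k y (s - τ)) (iteratedDeriv (k + 1) y (t - τ)) t :=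
  HasDerivAt.comp_sub_const t τ (aux_hasDerivAt hy k (t - τ))

/-- A family of functions, each the derivative of the previous one, gives the iterated
derivatives of its first member. -/
theorem aux_family (F : ℕ → ℝ → ℝ) (h : ∀ n t, HasDerivAt (F n) (F (n + 1) t) t) (n : ℕ) :
    iteratedDeriv n (F 0) = F n := by
  induction n with
  | zero => exact iteratedDeriv_zero
  | succ n ih =>
    rw [iteratedDeriv_succ, ih]
    funext t
    exact (h n t).deriv

/-- Multi-input example (Section 4.2) of the paper: the formulas `x = Qy`, `u = Ry`
produced by the algorithm parameterize solutions of the two-input time-delay system: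
for arbitrary smooth `y₁, y₂` (a π-flat output with `π = δ(1+δ)`), the functions
`x₁, x₂, x₃, x₄, u₁, u₂` defined below satisfy all four system equations. -/
theorem multi_input_example_parameterization (τ : ℝ) (y₁ y₂ : ℝ → ℝ)
    (hy₁ : ContDiff ℝ (⊤ : ℕ∞) y₁) (hy₂ : ContDiff ℝ (⊤ : ℕ∞) y₂)
    (x₁ x₂ x₃ x₄ u₁ u₂ : ℝ → ℝ)
    (hx₁ : x₁ = y₂) (hx₂ : x₂ = y₁)
    (hx₃ : x₃ = fun t => -y₁ t + iteratedDeriv 2 y₁ t - y₂ (t - τ) +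
      iteratedDeriv 2 y₂ t + iteratedDeriv 3 y₂ t)
    (hx₄ : x₄ = fun t => iteratedDeriv 1 y₁ t - iteratedDeriv 2 y₁ t +
      iteratedDeriv 1 y₂ t - iteratedDeriv 1 y₂ (t - τ) + iteratedDeriv 2 y₂ t)
    (hu₁ : u₁ = fun t => -iteratedDeriv 3 y₁ t + iteratedDeriv 1 y₂ t -
      iteratedDeriv 3 y₂ t - iteratedDeriv 4 y₂ t)
    (hu₂ : u₂ = fun t => iteratedDeriv 3 y₁ t + iteratedDeriv 4 y₁ t -
      iteratedDeriv 2 y₂ t + iteratedDeriv 3 y₂ t + 2 * iteratedDeriv 4 y₂ t +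
      iteratedDeriv 5 y₂ t) :
    ∀ t : ℝ,
      (iteratedDeriv 1 x₁ t + iteratedDeriv 2 x₁ t - 2 * iteratedDeriv 2 x₁ (t - τ) +
        iteratedDeriv 3 x₁ t + iteratedDeriv 4 x₁ (t - τ) - iteratedDeriv 3 x₂ t +
        iteratedDeriv 5 x₂ t - iteratedDeriv 2 x₃ t - iteratedDeriv 1 x₄ t +
        iteratedDeriv 3 x₄ t = u₁ t + iteratedDeriv 1 u₁ t + u₂ t) ∧
      (iteratedDeriv 1 x₁ t + iteratedDeriv 1 x₁ (t - τ) - iteratedDeriv 1 x₁ (t - 2*τ) +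
        iteratedDeriv 2 x₁ t + iteratedDeriv 2 x₁ (t - τ) + iteratedDeriv 2 x₁ (t - 2*τ) -
        iteratedDeriv 3 x₁ (t - τ) + 2 * iteratedDeriv 1 x₂ t + iteratedDeriv 1 x₂ (t - τ) -
        iteratedDeriv 2 x₂ t - iteratedDeriv 4 x₂ t + iteratedDeriv 1 x₃ t +
        iteratedDeriv 2 x₃ (t - τ) - x₄ t - x₄ (t - τ) - iteratedDeriv 2 x₄ t =
        iteratedDeriv 2 u₁ (t - τ) + iteratedDeriv 1 u₂ (t - τ)) ∧
      (-x₁ (t - 2*τ) + iteratedDeriv 1 x₁ (t - 3*τ) + iteratedDeriv 2 x₁ (t - 2*τ) -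
        x₂ (t - τ) + iteratedDeriv 1 x₂ (t - 2*τ) + iteratedDeriv 3 x₂ (t - τ) -
        x₃ (t - τ) + iteratedDeriv 1 x₃ (t - 2*τ) + iteratedDeriv 1 x₄ (t - τ) =
        iteratedDeriv 1 u₁ (t - 2*τ) + u₂ (t - 2*τ)) ∧
      (iteratedDeriv 1 x₁ (t - τ) + iteratedDeriv 1 x₂ t + iteratedDeriv 1 x₃ t =
        iteratedDeriv 1 u₁ t + u₂ t) := by
  have d1 := aux_hasDerivAt hy₁
  have d2 := aux_hasDerivAt hy₂
  have e2 := aux_hasDerivAt_shift hy₂ τ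
  have X3 : ∀ n, iteratedDeriv n x₃ = fun t => -iteratedDeriv n y₁ t + iteratedDeriv (n + 2) y₁ t
      - iteratedDeriv n y₂ (t - τ) + iteratedDeriv (n + 2) y₂ t + iteratedDeriv (n + 3) y₂ t := by
    intro n
    rw [← aux_family (fun n t => -iteratedDeriv n y₁ t + iteratedDeriv (n + 2) y₁ t
      - iteratedDeriv n y₂ (t - τ) + iteratedDeriv (n + 2) y₂ t + iteratedDeriv (n + 3) y₂ t)
      (fun n t => ((((d1 n t).neg.add (d1 (n + 2) t)).sub (e2 n t)).add (d2 (n + 2) t)).add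
        (d2 (n + 3) t)) n, hx₃]
    simp only [iteratedDeriv_zero, Nat.zero_add]
  have X4 : ∀ n, iteratedDeriv n x₄ = fun t => iteratedDeriv (n + 1) y₁ t
      - iteratedDeriv (n + 2) y₁ t + iteratedDeriv (n + 1) y₂ t
      - iteratedDeriv (n + 1) y₂ (t - τ) + iteratedDeriv (n + 2) y₂ t := by
    intro n
    rw [← aux_family (fun n t => iteratedDeriv (n + 1) y₁ t
      - iteratedDeriv (n + 2) y₁ t + iteratedDeriv (n + 1) y₂ t
      - iteratedDeriv (n + 1) y₂ (t - τ) + iteratedDeriv (n + 2) y₂ t)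
      (fun n t => ((((d1 (n + 1) t).sub (d1 (n + 2) t)).add (d2 (n + 1) t)).sub
        (e2 (n + 1) t)).add (d2 (n + 2) t)) n, hx₄]
  have U1 : ∀ n, iteratedDeriv n u₁ = fun t => -iteratedDeriv (n + 3) y₁ t
      + iteratedDeriv (n + 1) y₂ t - iteratedDeriv (n + 3) y₂ t
      - iteratedDeriv (n + 4) y₂ t := by
    intro n
    rw [← aux_family (fun n t => -iteratedDeriv (n + 3) y₁ t
      + iteratedDeriv (n + 1) y₂ t - iteratedDeriv (n + 3) y₂ t
      - iteratedDeriv (n + 4) y₂ t)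
      (fun n t => (((d1 (n + 3) t).neg.add (d2 (n + 1) t)).sub (d2 (n + 3) t)).sub
        (d2 (n + 4) t)) n, hu₁]
  have U2 : ∀ n, iteratedDeriv n u₂ = fun t => iteratedDeriv (n + 3) y₁ t
      + iteratedDeriv (n + 4) y₁ t - iteratedDeriv (n + 2) y₂ t + iteratedDeriv (n + 3) y₂ t
      + 2 * iteratedDeriv (n + 4) y₂ t + iteratedDeriv (n + 5) y₂ t := by
    intro n
    rw [← aux_family (fun n t => iteratedDeriv (n + 3) y₁ t
      + iteratedDeriv (n + 4) y₁ t - iteratedDeriv (n + 2) y₂ t + iteratedDeriv (n + 3) y₂ t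
      + 2 * iteratedDeriv (n + 4) y₂ t + iteratedDeriv (n + 5) y₂ t)
      (fun n t => (((((d1 (n + 3) t).add (d1 (n + 4) t)).sub (d2 (n + 2) t)).add
        (d2 (n + 3) t)).add ((d2 (n + 4) t).const_mul 2)).add (d2 (n + 5) t)) n, hu₂]
  intro t
  have s2 : t - τ - τ = t - 2 * τ := by ring
  have s3 : t - 2 * τ - τ = t - 3 * τ := by ring
  simp only [X3, X4, U1, U2]
  simp only [hx₁, hx₂, hx₃, hx₄, hu₁, hu₂, s2, s3, Nat.reduceAdd]
  refine ⟨?_, ?_, ?_, ?_⟩ <;> ring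
end

section
/- Let η₁, η₂, τ₁, τ₂ be real numbers with η₁ ≠ 0, and let ψ₁, φ₁, ψ₂, φ₂, u₁, u₂ : ℝ → ℝ with ψ₁, φ₁, ψ₂, φ₂ differentiable. Assume that for all t ∈ ℝ: (i) ψ₁(t) + φ₁(t) = ψ₂(t) + φ₂(t); (ii) deriv ψ₁ t + deriv φ₁ t + η₁·(ψ₁(t) − φ₁(t)) + η₂·(ψ₂(t) − φ₂(t)) = 0; (iii) φ₁(t − 2τ₁) + ψ₁(t) = u₁(t − τ₁); (iv) φ₂(t) + ψ₂(t − 2τ₂) = u₂(t − τ₂). Then, writing y₁ := ψ₂ and y₂ := φ₂, for all t ∈ ℝ: ψ₁(t) = (1/(2η₁))·(−deriv y₁ t + (η₁−η₂)·y₁(t) − deriv y₂ t + (η₁+η₂)·y₂(t)); φ₁(t) = (1/(2η₁))·(deriv y₁ t + (η₁+η₂)·y₁(t) + deriv y₂ t + (η₁−η₂)·y₂(t)); u₁(t) = (1/(2η₁))·(deriv y₁ (t−τ₁) − deriv y₁ (t+τ₁) + deriv y₂ (t−τ₁) − deriv y₂ (t+τ₁) + (η₁+η₂)·(y₁(t−τ₁)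 + y₂(t+τ₁)) + (η₁−η₂)·(y₂(t−τ₁) + y₁(t+τ₁))); and u₂(t) = y₁(t − τ₂) + y₂(t + τ₂). -/
/-- Vibrating-string-with-interior-mass example (Section 4.3): `(y₁, y₂) = (ψ₂, φ₂)` is a
`δ₁δ₂`-flat output: all system variables, including the inputs, are recovered from
`y₁, y₂`, their first derivatives, their delays and their advances. -/
theorem vibrating_string_flat_output (η₁ η₂ τ₁ τ₂ : ℝ) (hη₁ : η₁ ≠ 0)
    (ψ₁ φ₁ ψ₂ φ₂ u₁ u₂ : ℝ → ℝ)
    (hψ₁ : Differentiable ℝ ψ₁) (hφ₁ : Differentiable ℝ φ₁)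
    (hψ₂ : Differentiable ℝ ψ₂) (hφ₂ : Differentiable ℝ φ₂)
    (h1 : ∀ t, ψ₁ t + φ₁ t = ψ₂ t + φ₂ t)
    (h2 : ∀ t, deriv ψ₁ t + deriv φ₁ t + η₁ * (ψ₁ t - φ₁ t) + η₂ * (ψ₂ t - φ₂ t) = 0)
    (h3 : ∀ t, φ₁ (t - 2*τ₁) + ψ₁ t = u₁ (t - τ₁))
    (h4 : ∀ t, φ₂ t + ψ₂ (t - 2*τ₂) = u₂ (t - τ₂)) :
    ∀ t : ℝ,
      ψ₁ t = (1/(2*η₁)) * (-deriv ψ₂ t + (η₁ - η₂) * ψ₂ t - deriv φ₂ t + (η₁ + η₂) * φ₂ t) ∧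
      φ₁ t = (1/(2*η₁)) * (deriv ψ₂ t + (η₁ + η₂) * ψ₂ t + deriv φ₂ t + (η₁ - η₂) * φ₂ t) ∧
      u₁ t = (1/(2*η₁)) * (deriv ψ₂ (t - τ₁) - deriv ψ₂ (t + τ₁) + deriv φ₂ (t - τ₁) -
        deriv φ₂ (t + τ₁) + (η₁ + η₂) * (ψ₂ (t - τ₁) + φ₂ (t + τ₁)) +
        (η₁ - η₂) * (φ₂ (t - τ₁) + ψ₂ (t + τ₁))) ∧
      u₂ t = ψ₂ (t - τ₂) + φ₂ (t + τ₂) := by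
  have hd : ∀ t, deriv ψ₁ t + deriv φ₁ t = deriv ψ₂ t + deriv φ₂ t := by
    intro t
    have e : ψ₁ + φ₁ = ψ₂ + φ₂ := funext h1
    rw [← deriv_add (hψ₁ t) (hφ₁ t), ← deriv_add (hψ₂ t) (hφ₂ t), e]
  have hne : 2 * η₁ ≠ 0 := mul_ne_zero two_ne_zero hη₁
  have hψ : ∀ t, ψ₁ t = (1/(2*η₁)) *
      (-deriv ψ₂ t + (η₁ - η₂) * ψ₂ t - deriv φ₂ t + (η₁ + η₂) * φ₂ t) := by
    intro t
    rw [one_div, eq_inv_mul_iff_mul_eq₀ hne]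
    linear_combination h2 t - hd t + η₁ * h1 t
  have hφ : ∀ t, φ₁ t = (1/(2*η₁)) *
      (deriv ψ₂ t + (η₁ + η₂) * ψ₂ t + deriv φ₂ t + (η₁ - η₂) * φ₂ t) := by
    intro t
    rw [one_div, eq_inv_mul_iff_mul_eq₀ hne]
    linear_combination -h2 t + hd t + η₁ * h1 t
  intro t
  refine ⟨hψ t, hφ t, ?_, ?_⟩
  · have h := h3 (t + τ₁)
    rw [show t + τ₁ - 2 * τ₁ = t - τ₁ by ring, show t + τ₁ - τ₁ = t by ring] at h
    rw [← h, hφ, hψ]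
    ring
  · have h := h4 (t + τ₂)
    rw [show t + τ₂ - 2 * τ₂ = t - τ₂ by ring, show t + τ₂ - τ₂ = t by ring] at h
    rw [← h]
    ring
end

section
/- Let η₁, η₂, τ₁, τ₂ be real numbers with η₁ ≠ 0, and let y₁, y₂ : ℝ → ℝ be twice differentiable (y₁, y₂ and deriv y₁, deriv y₂ differentiable). Define ψ₂ := y₁, φ₂ := y₂, ψ₁(t) := (1/(2η₁))·(−deriv y₁ t + (η₁−η₂)·y₁(t) − deriv y₂ t + (η₁+η₂)·y₂(t)), φ₁(t) := (1/(2η₁))·(deriv y₁ t + (η₁+η₂)·y₁(t) + deriv y₂ t + (η₁−η₂)·y₂(t)), u₁(t) := φ₁(t − τ₁) + ψ₁(t + τ₁), and u₂(t) := y₂(t + τ₂) + y₁(t − τ₂). Then for all t ∈ ℝ: (i) ψ₁(t) + φ₁(t) = ψ₂(t) + φ₂(t); (ii) deriv ψ₁ t + deriv φ₁ t + η₁·(ψ₁(t) − φ₁(t)) + η₂·(ψ₂(t) − φ₂(t)) = 0; (iii) φ₁(t − 2τ₁) + ψ₁(t) = u₁(t − τ₁); (iv) φ₂(t) + ψ₂(t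 − 2τ₂) = u₂(t − τ₂). -/
/-- Converse (parameterization) direction of the vibrating-string example (Section 4.3):
for arbitrary twice differentiable `y₁, y₂`, the functions `ψ₁, φ₁, ψ₂, φ₂, u₁, u₂`
defined from `y₁, y₂`, their first derivatives, delays and advances satisfy all four
system equations; i.e. `x = Qy`, `u = Ry` produce solutions of the system. -/
theorem vibrating_string_parameterization (η₁ η₂ τ₁ τ₂ : ℝ) (hη₁ : η₁ ≠ 0)
    (y₁ y₂ : ℝ → ℝ)
    (hy₁ : Differentiable ℝ y₁) (hy₂ : Differentiable ℝ y₂)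
    (hy₁' : Differentiable ℝ (deriv y₁)) (hy₂' : Differentiable ℝ (deriv y₂))
    (ψ₁ φ₁ ψ₂ φ₂ u₁ u₂ : ℝ → ℝ)
    (hψ₂ : ψ₂ = y₁) (hφ₂ : φ₂ = y₂)
    (hψ₁ : ψ₁ = fun t => (1/(2*η₁)) * (-deriv y₁ t + (η₁ - η₂) * y₁ t - deriv y₂ t +
      (η₁ + η₂) * y₂ t))
    (hφ₁ : φ₁ = fun t => (1/(2*η₁)) * (deriv y₁ t + (η₁ + η₂) * y₁ t + deriv y₂ t +
      (η₁ - η₂) * y₂ t))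
    (hu₁ : u₁ = fun t => φ₁ (t - τ₁) + ψ₁ (t + τ₁))
    (hu₂ : u₂ = fun t => y₂ (t + τ₂) + y₁ (t - τ₂)) :
    ∀ t : ℝ,
      (ψ₁ t + φ₁ t = ψ₂ t + φ₂ t) ∧
      (deriv ψ₁ t + deriv φ₁ t + η₁ * (ψ₁ t - φ₁ t) + η₂ * (ψ₂ t - φ₂ t) = 0) ∧
      (φ₁ (t - 2*τ₁) + ψ₁ t = u₁ (t - τ₁)) ∧
      (φ₂ t + ψ₂ (t - 2*τ₂) = u₂ (t - τ₂)) := by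
  intro t
  have key : ∀ s, ψ₁ s + φ₁ s = y₁ s + y₂ s := by
    intro s
    simp only [hψ₁, hφ₁]
    field_simp
    ring
  have d1 : DifferentiableAt ℝ ψ₁ t := by
    rw [hψ₁]
    fun_prop
  have d2 : DifferentiableAt ℝ φ₁ t := by
    rw [hφ₁]
    fun_prop
  have hd : deriv ψ₁ t + deriv φ₁ t = deriv y₁ t + deriv y₂ t := by
    have e : ψ₁ + φ₁ = y₁ + y₂ := funext key
    rw [← deriv_add d1 d2, e, deriv_add (hy₁ t) (hy₂ t)]
  refine ⟨?_, ?_, ?_, ?_⟩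
  · rw [key, hψ₂, hφ₂]
  · rw [hd, hψ₂, hφ₂]
    simp only [hψ₁, hφ₁]
    field_simp
    ring
  · rw [hu₁]
    have e1 : t - τ₁ - τ₁ = t - 2 * τ₁ := by ring
    simp only [e1, sub_add_cancel]
  · rw [hu₂, hψ₂, hφ₂]
    have e1 : t - τ₂ - τ₂ = t - 2 * τ₂ := by ring
    simp only [e1, sub_add_cancel]
end
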